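/- arXiv:1303.3651 — 5 statements merged into one kernel-verified Lean document; each statement's English description precedes it below -/
import Mathlib

section
/- Suppose all data is ready before transmission: B_1 = B ≥ 0 and B_i = 0 for i ≥ 2, and suppose E_i ≤ E_max for all i ≥ 2. For P ≥ 0 let f(P) be the supremum of the total throughput Σ_{i=1}^N (T_f/2)·log₂(1 + γ_i p_i) over allocations (p, p_H) with 0 ≤ p_{H,i} ≤ p_i satisfying Causality, Capacity, and the average grid-power constraint (1/N)·Σ_{i=1}^N (p_i − p_{H,i}) ≤ P; for b ≥ 0 let g(b) be the infimum of the average grid power (1/N)·Σ_{i=1}^N (p_i − p_{H,i}) over allocations with 0 ≤ p_{H,i} ≤ p_i satisfying Causality, Capacity, and Σ_{i=1}^N (T_f/2)·log₂(1 + γ_i p_i) ≥ b. If for a given P ≥ 0 the supremum defining f(P) is attained by some feasible allocation and the infimum defining g(f(P)) is attained by some feasible allocation, then g(f(P)) = P. -/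
/-!
Frames are indexed by `i ∈ {1, …, N}` (we use functions `ℕ → ℝ`, with only the
coordinates in `Finset.Icc 1 N` relevant).  The rate of frame `i` under power `p i`
is `Tf / 2 * logb 2 (1 + γ i * p i)`.
-/

/-- Rate of frame `i`. -/
noncomputable def rate (Tf : ℝ) (γ p : ℕ → ℝ) (i : ℕ) : ℝ :=
  Tf / 2 * Real.logb 2 (1 + γ i * p i)

/-- `0 ≤ p_{H,i} ≤ p_i` for all frames. -/
def Alloc (N : ℕ) (p pH : ℕ → ℝ) : Prop :=
  ∀ i ∈ Finset.Icc 1 N, 0 ≤ pH i ∧ pH i ≤ p i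

/-- Energy causality: `Σ_{i=1}^k T_f p_{H,i} ≤ Σ_{i=1}^k E_i` for `k = 1, …, N`. -/
def Causality (N : ℕ) (Tf : ℝ) (E pH : ℕ → ℝ) : Prop :=
  ∀ k ∈ Finset.Icc 1 N, ∑ i ∈ Finset.Icc 1 k, Tf * pH i ≤ ∑ i ∈ Finset.Icc 1 k, E i

/-- Battery capacity: `Σ_{i=1}^{k+1} E_i − Σ_{i=1}^k T_f p_{H,i} ≤ E_max` for
`k = 1, …, N−1`. -/
def Capacity (N : ℕ) (Tf Emax : ℝ) (E pH : ℕ → ℝ) : Prop :=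
  ∀ k ∈ Finset.Icc 1 (N - 1),
    (∑ i ∈ Finset.Icc 1 (k + 1), E i) - ∑ i ∈ Finset.Icc 1 k, Tf * pH i ≤ Emax

/-!
Grid power spent in a single frame buys throughput at a rate that is bounded below as long as the
power of that frame stays bounded, and it leaves the causality and capacity constraints untouched
because these only see the harvested power. Hence an allocation reaching throughput `f P` at average
grid power below `P` could be improved beyond `f P` within the budget `P`, so `P ≤ g (f P)`; and an
allocation within the budget `P` whose throughput is almost `f P` reaches `f P` after an arbitrarily
small increase of its grid power, so `g (f P) ≤ P`.
-/

section CostReward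

variable {X α β : Type*}
  [AddCommGroup α] [LinearOrder α] [IsOrderedAddMonoid α] [DenselyOrdered α]
  [AddCommGroup β] [LinearOrder β] [IsOrderedAddMonoid β]

theorem isGLB_cost_of_isLUB_reward {S : Set X} {c : X → α} {r : X → β} {P : α} {F : β}
    (hF : IsLUB (r '' {x ∈ S | c x ≤ P}) F)
    (himprove : ∀ ε > 0, ∃ δ > 0, ∀ x ∈ S, c x ≤ P → ∃ y ∈ S, c y ≤ c x + ε ∧ r x + δ ≤ r y) :
    IsGLB (c '' {x ∈ S | F ≤ r x}) P := by
  constructor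
  · rintro _ ⟨x, ⟨hxS, hFx⟩, rfl⟩
    by_contra! hcx
    obtain ⟨δ, hδ, himp⟩ := himprove (P - c x) (sub_pos.2 hcx)
    obtain ⟨y, hyS, hcy, hry⟩ := himp x hxS hcx.le
    have hyF : r y ≤ F := hF.1 ⟨y, ⟨hyS, hcy.trans_eq (add_sub_cancel _ _)⟩, rfl⟩
    exact (hFx.trans_lt (lt_add_of_pos_right _ hδ)).not_ge (hry.trans hyF)
  · refine fun b hb => le_of_forall_pos_le_add fun ε hε => ?_
    obtain ⟨δ, hδ, himp⟩ := himprove ε hε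
    obtain ⟨_, ⟨x, ⟨hxS, hcx⟩, rfl⟩, hFx, -⟩ := hF.exists_between_sub_self hδ
    obtain ⟨y, hyS, hcy, hry⟩ := himp x hxS hcx
    calc b ≤ c y := hb ⟨y, ⟨hyS, (sub_lt_iff_lt_add.1 hFx).le.trans hry⟩, rfl⟩
      _ ≤ P + ε := hcy.trans (add_le_add_left hcx ε)

end CostReward

theorem logb_add_logb_one_add_div_le {b x y z : ℝ} (hb : 1 < b) (hx : 0 < x) (hxy : x ≤ y)
    (hz : 0 ≤ z) : Real.logb b x + Real.logb b (1 + z / y) ≤ Real.logb b (x + z) := by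
  have hy : 0 < y := hx.trans_le hxy
  rw [← Real.logb_mul (by positivity) (by positivity)]
  refine Real.logb_le_logb_of_le hb (by positivity) ?_
  calc x * (1 + z / y) = x + x / y * z := by ring
    _ ≤ x + 1 * z := by gcongr; exact (div_le_one hy).2 hxy
    _ = x + z := by rw [one_mul]

/-- Total throughput of the frames `1, …, N` under the power allocation `p`. -/
noncomputable def throughput (N : ℕ) (Tf : ℝ) (γ p : ℕ → ℝ) : ℝ :=
  ∑ i ∈ Finset.Icc 1 N, rate Tf γ p i

/-- Average power drawn from the grid, i.e. the part of `p` not covered by the harvested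
power `pH`. -/
noncomputable def avgGridPower (N : ℕ) (p pH : ℕ → ℝ) : ℝ :=
  (1 / (N : ℝ)) * ∑ i ∈ Finset.Icc 1 N, (p i - pH i)

/-- The pairs `(p, pH)` of total and harvested powers that satisfy the allocation, causality and
capacity constraints. -/
def feasibleSet (N : ℕ) (Tf Emax : ℝ) (E : ℕ → ℝ) : Set ((ℕ → ℝ) × (ℕ → ℝ)) :=
  {a | Alloc N a.1 a.2 ∧ Causality N Tf E a.2 ∧ Capacity N Tf Emax E a.2}

/-- The optimal value `f P`: the largest throughput under the average grid power budget `P`. -/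
noncomputable def maxThroughput (N : ℕ) (Tf Emax : ℝ) (γ E : ℕ → ℝ) (P : ℝ) : ℝ :=
  sSup {t : ℝ | ∃ p pH : ℕ → ℝ,
    Alloc N p pH ∧ Causality N Tf E pH ∧ Capacity N Tf Emax E pH ∧
    avgGridPower N p pH ≤ P ∧ t = throughput N Tf γ p}

/-- The optimal value `g b`: the least average grid power that delivers the throughput `b`. -/
noncomputable def minGridPower (N : ℕ) (Tf Emax : ℝ) (γ E : ℕ → ℝ) (b : ℝ) : ℝ :=
  sInf {v : ℝ | ∃ p pH : ℕ → ℝ,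
    Alloc N p pH ∧ Causality N Tf E pH ∧ Capacity N Tf Emax E pH ∧
    b ≤ throughput N Tf γ p ∧ v = avgGridPower N p pH}

section PowerAllocation

variable {N j : ℕ} {Tf Emax P d M : ℝ} {γ E p q pH : ℕ → ℝ}

theorem maxThroughput_eq_sSup_image :
    maxThroughput N Tf Emax γ E P = sSup ((fun a => throughput N Tf γ a.1) ''
      {a ∈ feasibleSet N Tf Emax E | avgGridPower N a.1 a.2 ≤ P}) :=
  congrArg sSup (by ext; simp [feasibleSet, and_assoc, eq_comm])

theorem minGridPower_eq_sInf_image {b : ℝ} :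
    minGridPower N Tf Emax γ E b = sInf ((fun a => avgGridPower N a.1 a.2) ''
      {a ∈ feasibleSet N Tf Emax E | b ≤ throughput N Tf γ a.1}) :=
  congrArg sInf (by ext; simp [feasibleSet, and_assoc, eq_comm])

theorem Alloc.nonneg (h : Alloc N p pH) (hj : j ∈ Finset.Icc 1 N) : 0 ≤ p j :=
  (h j hj).1.trans (h j hj).2

theorem Alloc.mono_left (h : Alloc N p pH) (hpq : p ≤ q) : Alloc N q pH :=
  fun i hi => ⟨(h i hi).1, (h i hi).2.trans (hpq i)⟩

theorem Alloc.le_of_avgGridPower_le (h : Alloc N p pH) (hP : avgGridPower N p pH ≤ P)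
    (hcaus : Causality N Tf E pH) (hTf : 0 < Tf) (hj : j ∈ Finset.Icc 1 N) :
    p j ≤ N * P + (∑ i ∈ Finset.Icc 1 N, E i) / Tf := by
  have hN : 1 ≤ N := (Finset.mem_Icc.1 hj).1.trans (Finset.mem_Icc.1 hj).2
  have hgrid : p j - pH j ≤ N * P := by
    rw [avgGridPower, one_div, inv_mul_le_iff₀ (by exact_mod_cast hN)] at hP
    exact (Finset.single_le_sum (f := fun i => p i - pH i)
      (fun i hi => sub_nonneg.2 (h i hi).2) hj).trans hP
  have hharvest : pH j ≤ (∑ i ∈ Finset.Icc 1 N, E i) / Tf := by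
    rw [le_div_iff₀' hTf]
    exact (Finset.single_le_sum (f := fun i => Tf * pH i)
      (fun i hi => mul_nonneg hTf.le (h i hi).1) hj).trans
        (hcaus N (Finset.mem_Icc.2 ⟨hN, le_rfl⟩))
  linarith

theorem rate_le_rate (hTf : 0 ≤ Tf) (hγ : 0 ≤ γ j) (hp : 0 ≤ p j) (hpq : p j ≤ q j) :
    rate Tf γ p j ≤ rate Tf γ q j :=
  mul_le_mul_of_nonneg_left
    (Real.logb_le_logb_of_le one_lt_two (by positivity) (by gcongr)) (by positivity)

theorem bddAbove_throughput (hTf : 0 < Tf) (hγ : ∀ i ∈ Finset.Icc 1 N, 0 ≤ γ i) :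
    BddAbove ((fun a => throughput N Tf γ a.1) ''
      {a ∈ feasibleSet N Tf Emax E | avgGridPower N a.1 a.2 ≤ P}) := by
  refine ⟨throughput N Tf γ fun _ => N * P + (∑ i ∈ Finset.Icc 1 N, E i) / Tf, ?_⟩
  rintro _ ⟨⟨p, pH⟩, ⟨⟨halloc, hcaus, -⟩, hP⟩, rfl⟩
  exact Finset.sum_le_sum fun i hi => rate_le_rate hTf.le (hγ i hi) (halloc.nonneg hi)
    (halloc.le_of_avgGridPower_le hP hcaus hTf hi)

theorem avgGridPower_add_single (hj : j ∈ Finset.Icc 1 N) :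
    avgGridPower N (p + Pi.single j d) pH = avgGridPower N p pH + d / N := by
  simp only [avgGridPower, Pi.add_apply, add_sub_right_comm, Finset.sum_add_distrib,
    Finset.sum_pi_single', if_pos hj]
  ring

theorem rate_add_le_rate_add_single (hTf : 0 ≤ Tf) (hγ : 0 ≤ γ j) (hd : 0 ≤ d) (hp : 0 ≤ p j)
    (hpM : p j ≤ M) :
    rate Tf γ p j + Tf / 2 * Real.logb 2 (1 + γ j * d / (1 + γ j * M)) ≤
      rate Tf γ (p + Pi.single j d) j := by
  have hlog := logb_add_logb_one_add_div_le (b := 2) (x := 1 + γ j * p j) (y := 1 + γ j * M)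
    (z := γ j * d) one_lt_two (by positivity) (by gcongr) (by positivity)
  simp only [rate, Pi.add_apply, Pi.single_eq_same]
  rw [← mul_add, mul_add (γ j), ← add_assoc]
  gcongr

theorem throughput_add_le_throughput_add_single (hTf : 0 ≤ Tf) (hj : j ∈ Finset.Icc 1 N)
    (hγ : 0 ≤ γ j) (hd : 0 ≤ d) (hp : 0 ≤ p j) (hpM : p j ≤ M) :
    throughput N Tf γ p + Tf / 2 * Real.logb 2 (1 + γ j * d / (1 + γ j * M)) ≤
      throughput N Tf γ (p + Pi.single j d) := by
  have hothers : ∀ i ∈ (Finset.Icc 1 N).erase j,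
      rate Tf γ p i = rate Tf γ (p + Pi.single j d) i := fun i hi => by
    simp only [rate, Pi.add_apply, Pi.single_eq_of_ne (Finset.ne_of_mem_erase hi), add_zero]
  rw [throughput, throughput, ← Finset.add_sum_erase _ _ hj, ← Finset.add_sum_erase _ _ hj,
    Finset.sum_congr rfl hothers, add_right_comm]
  gcongr
  exact rate_add_le_rate_add_single hTf hγ hd hp hpM

theorem exists_throughput_gain (hTf : 0 < Tf) (hj : j ∈ Finset.Icc 1 N) (hγ : 0 < γ j) {ε : ℝ}
    (hε : 0 < ε) :
    ∃ δ > 0, ∀ a ∈ feasibleSet N Tf Emax E, avgGridPower N a.1 a.2 ≤ P →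
      ∃ a' ∈ feasibleSet N Tf Emax E, avgGridPower N a'.1 a'.2 ≤ avgGridPower N a.1 a.2 + ε ∧
        throughput N Tf γ a.1 + δ ≤ throughput N Tf γ a'.1 := by
  have hN : (0 : ℝ) < N :=
    Nat.cast_pos.2 ((Finset.mem_Icc.1 hj).1.trans (Finset.mem_Icc.1 hj).2)
  obtain ⟨M, hM, hpowM⟩ : ∃ M : ℝ, 0 ≤ M ∧ N * P + (∑ i ∈ Finset.Icc 1 N, E i) / Tf ≤ M :=
    ⟨|_|, abs_nonneg _, le_abs_self _⟩
  have hgain : 0 < Real.logb 2 (1 + γ j * (N * ε) / (1 + γ j * M)) :=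
    Real.logb_pos one_lt_two (lt_add_of_pos_right _ (by positivity))
  refine ⟨Tf / 2 * Real.logb 2 (1 + γ j * (N * ε) / (1 + γ j * M)), by positivity, ?_⟩
  rintro ⟨p, pH⟩ ⟨halloc, hcaus, hcap⟩ hP
  have hmono : p ≤ p + Pi.single j (N * ε) :=
    le_add_of_nonneg_right (Pi.single_nonneg.2 (by positivity))
  have hgrid : avgGridPower N (p + Pi.single j (N * ε)) pH = avgGridPower N p pH + ε := by
    rw [avgGridPower_add_single hj, mul_div_cancel_left₀ _ hN.ne']
  have hfeas : (p + Pi.single j (N * ε), pH) ∈ feasibleSet N Tf Emax E :=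
    ⟨halloc.mono_left hmono, hcaus, hcap⟩
  have hpM : p j ≤ M := (halloc.le_of_avgGridPower_le hP hcaus hTf hj).trans hpowM
  exact ⟨_, hfeas, hgrid.le, throughput_add_le_throughput_add_single hTf.le hj hγ.le
    (by positivity) (halloc.nonneg hj) hpM⟩

-- Spending the energy of each frame as it arrives leaves the battery empty at the next arrival.
theorem feasibleSet_nonempty (hTf : 0 < Tf) (hE : ∀ i ∈ Finset.Icc 1 N, 0 ≤ E i)
    (hEcap : ∀ i ∈ Finset.Icc 2 N, E i ≤ Emax) : (feasibleSet N Tf Emax E).Nonempty := by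
  have hspend : ∀ i, Tf * (E i / Tf) = E i := fun i => mul_div_cancel₀ _ hTf.ne'
  refine ⟨(fun i => E i / Tf, fun i => E i / Tf),
    fun i hi => ⟨div_nonneg (hE i hi) hTf.le, le_rfl⟩, fun k _ => ?_, fun k hk => ?_⟩
  · simp only [hspend, le_refl]
  · rw [Finset.mem_Icc] at hk
    simp only [hspend, Finset.sum_Icc_succ_top (Nat.le_add_left 1 k), add_sub_cancel_left]
    exact hEcap (k + 1) (Finset.mem_Icc.2 (by lia))

theorem isLUB_maxThroughput (hTf : 0 < Tf) (hγ : ∀ i ∈ Finset.Icc 1 N, 0 ≤ γ i)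
    (hfeas : (feasibleSet N Tf Emax E).Nonempty) (hP : 0 ≤ P) :
    IsLUB ((fun a => throughput N Tf γ a.1) ''
      {a ∈ feasibleSet N Tf Emax E | avgGridPower N a.1 a.2 ≤ P})
      (maxThroughput N Tf Emax γ E P) := by
  obtain ⟨⟨p, pH⟩, halloc, hcaus, hcap⟩ := hfeas
  have hharvest : (pH, pH) ∈ feasibleSet N Tf Emax E :=
    ⟨fun i hi => ⟨(halloc i hi).1, le_rfl⟩, hcaus, hcap⟩
  have hbudget : avgGridPower N pH pH ≤ P := by simpa [avgGridPower] using hP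
  rw [maxThroughput_eq_sSup_image]
  exact isLUB_csSup ⟨_, Set.mem_image_of_mem _ ⟨hharvest, hbudget⟩⟩ (bddAbove_throughput hTf hγ)

end PowerAllocation

theorem statement_0_general {N : ℕ} (hN : 1 ≤ N) {Tf : ℝ} (hTf : 0 < Tf) {γ E : ℕ → ℝ} {Emax : ℝ}
    (hγ : ∀ i ∈ Finset.Icc 1 N, 0 < γ i) (hfeas : (feasibleSet N Tf Emax E).Nonempty)
    {P : ℝ} (hP : 0 ≤ P) :
    minGridPower N Tf Emax γ E (maxThroughput N Tf Emax γ E P) = P := by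
  have h1 : 1 ∈ Finset.Icc 1 N := Finset.mem_Icc.2 ⟨le_rfl, hN⟩
  have hGLB : IsGLB ((fun a => avgGridPower N a.1 a.2) '' {a ∈ feasibleSet N Tf Emax E |
      maxThroughput N Tf Emax γ E P ≤ throughput N Tf γ a.1}) P :=
    isGLB_cost_of_isLUB_reward (isLUB_maxThroughput hTf (fun i hi => (hγ i hi).le) hfeas hP)
      fun _ => exists_throughput_gain hTf h1 (hγ 1 h1)
  rw [minGridPower_eq_sInf_image]
  exact hGLB.csInf_eq hGLB.nonempty

/-- with all data ready before transmission, if the supremum defining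
`f P` and the infimum defining `g (f P)` are attained, then `g (f P) = P`. -/
theorem statement_0
    (N : ℕ) (hN : 1 ≤ N) (Tf : ℝ) (hTf : 0 < Tf)
    (γ E B : ℕ → ℝ) (Emax : ℝ) (hEmax : 0 ≤ Emax)
    (hγ : ∀ i ∈ Finset.Icc 1 N, 0 < γ i)
    (hE : ∀ i ∈ Finset.Icc 1 N, 0 ≤ E i)
    -- all data ready before transmission: `B 1 = B ≥ 0` and `B i = 0` for `i ≥ 2`
    (hB1 : 0 ≤ B 1)
    (hB0 : ∀ i ∈ Finset.Icc 2 N, B i = 0)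
    -- each later energy arrival fits in the battery
    (hEcap : ∀ i ∈ Finset.Icc 2 N, E i ≤ Emax)
    (f g : ℝ → ℝ)
    (hf : ∀ P : ℝ, f P = sSup {t : ℝ | ∃ p pH : ℕ → ℝ,
      Alloc N p pH ∧ Causality N Tf E pH ∧ Capacity N Tf Emax E pH ∧
      (1 / (N : ℝ)) * ∑ i ∈ Finset.Icc 1 N, (p i - pH i) ≤ P ∧
      t = ∑ i ∈ Finset.Icc 1 N, rate Tf γ p i})
    (hg : ∀ b : ℝ, g b = sInf {v : ℝ | ∃ p pH : ℕ → ℝ,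
      Alloc N p pH ∧ Causality N Tf E pH ∧ Capacity N Tf Emax E pH ∧
      b ≤ ∑ i ∈ Finset.Icc 1 N, rate Tf γ p i ∧
      v = (1 / (N : ℝ)) * ∑ i ∈ Finset.Icc 1 N, (p i - pH i)})
    (P : ℝ) (hP : 0 ≤ P)
    -- the supremum defining `f P` is attained by a feasible allocation
    (hattF : f P ∈ {t : ℝ | ∃ p pH : ℕ → ℝ,
      Alloc N p pH ∧ Causality N Tf E pH ∧ Capacity N Tf Emax E pH ∧
      (1 / (N : ℝ)) * ∑ i ∈ Finset.Icc 1 N, (p i - pH i) ≤ P ∧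
      t = ∑ i ∈ Finset.Icc 1 N, rate Tf γ p i})
    -- the infimum defining `g (f P)` is attained by a feasible allocation
    (hattG : g (f P) ∈ {v : ℝ | ∃ p pH : ℕ → ℝ,
      Alloc N p pH ∧ Causality N Tf E pH ∧ Capacity N Tf Emax E pH ∧
      f P ≤ ∑ i ∈ Finset.Icc 1 N, rate Tf γ p i ∧
      v = (1 / (N : ℝ)) * ∑ i ∈ Finset.Icc 1 N, (p i - pH i)}) :
    g (f P) = P := by
  rw [hg, hf]
  exact statement_0_general hN hTf hγ (feasibleSet_nonempty hTf hE hEcap) hP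
end

section
/- If E_i ≤ E_max for all i ∈ {2,…,N}, then the feasible set of the grid power minimization problem is nonempty: there exists an allocation (p, p_H) with 0 ≤ p_{H,i} ≤ p_i for all i satisfying the Causality, Capacity, and Data constraints. -/
/-- Data constraints: `Σ_{i=k}^N rate_i ≥ Σ_{i=k}^N B_i` for `k = 1, …, N`. -/
def DataC (N : ℕ) (Tf : ℝ) (γ B p : ℕ → ℝ) : Prop :=
  ∀ k ∈ Finset.Icc 1 N, ∑ i ∈ Finset.Icc k N, B i ≤ ∑ i ∈ Finset.Icc k N, rate Tf γ p i

/-!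
Spend every harvest in the frame in which it arrives, so that the battery holds only `E_{k+1}` at
the start of frame `k + 1`, and let the grid top up each frame to the power that delivers `B_i`
within frame `i` itself. The constraints then hold frame by frame, without any trade-off between
frames.
-/

/-- The power at which a frame of duration `Tf` and reference SNR `g` carries exactly the data
amount `b`: the solution `x` of `Tf / 2 * logb 2 (1 + g * x) = b`. It is a junk value when `Tf` or
`g` is `0`. -/
noncomputable def requiredPower (Tf g b : ℝ) : ℝ :=
  ((2 : ℝ) ^ (2 * b / Tf) - 1) / g

theorem le_rate_iff_requiredPower_le {Tf : ℝ} {γ p : ℕ → ℝ} {i : ℕ} {b : ℝ} (hTf : 0 < Tf)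
    (hγ : 0 < γ i) (hp : 0 < 1 + γ i * p i) :
    b ≤ rate Tf γ p i ↔ requiredPower Tf (γ i) b ≤ p i :=
  calc
    b ≤ rate Tf γ p i ↔ 2 * b / Tf ≤ Real.logb 2 (1 + γ i * p i) := by
      rw [rate, div_le_iff₀ hTf]
      constructor <;> intro h <;> linarith
    _ ↔ (2 : ℝ) ^ (2 * b / Tf) ≤ 1 + γ i * p i := Real.le_logb_iff_rpow_le one_lt_two hp
    _ ↔ requiredPower Tf (γ i) b ≤ p i := by
      rw [requiredPower, div_le_iff₀' hγ, sub_le_iff_le_add']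

section Constraints

variable {N : ℕ} {Tf : ℝ}

theorem Causality.of_forall_le {E pH : ℕ → ℝ} (h : ∀ i ∈ Finset.Icc 1 N, Tf * pH i ≤ E i) :
    Causality N Tf E pH := fun _ hk =>
  Finset.sum_le_sum fun i hi => h i (Finset.Icc_subset_Icc_right (Finset.mem_Icc.1 hk).2 hi)

theorem Capacity.of_forall_le {Emax : ℝ} {E pH : ℕ → ℝ}
    (hspend : ∀ i ∈ Finset.Icc 1 (N - 1), E i ≤ Tf * pH i)
    (hcap : ∀ i ∈ Finset.Icc 2 N, E i ≤ Emax) : Capacity N Tf Emax E pH := by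
  intro k hk
  have hspent : ∑ i ∈ Finset.Icc 1 k, E i ≤ ∑ i ∈ Finset.Icc 1 k, Tf * pH i :=
    Finset.sum_le_sum fun i hi =>
      hspend i (Finset.Icc_subset_Icc_right (Finset.mem_Icc.1 hk).2 hi)
  have hnext : E (k + 1) ≤ Emax := hcap (k + 1) (by simp only [Finset.mem_Icc] at hk ⊢; omega)
  rw [Finset.sum_Icc_succ_top (by omega)]
  linarith

theorem DataC.of_forall_le_rate {γ B p : ℕ → ℝ} (h : ∀ i ∈ Finset.Icc 1 N, B i ≤ rate Tf γ p i) :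
    DataC N Tf γ B p := fun _ hk =>
  Finset.sum_le_sum fun i hi => h i (Finset.Icc_subset_Icc_left (Finset.mem_Icc.1 hk).1 hi)

end Constraints

/-- if `E_i ≤ E_max` for all `i ∈ {2, …, N}`, the feasible set of the
grid power minimization problem is nonempty. -/
theorem statement_5
    (N : ℕ) (hN : 1 ≤ N) (Tf : ℝ) (hTf : 0 < Tf)
    (γ E B : ℕ → ℝ) (Emax : ℝ) (hEmax : 0 ≤ Emax)
    (hγ : ∀ i ∈ Finset.Icc 1 N, 0 < γ i)
    (hE : ∀ i ∈ Finset.Icc 1 N, 0 ≤ E i)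
    (hB : ∀ i ∈ Finset.Icc 1 N, 0 ≤ B i)
    (hEcap : ∀ i ∈ Finset.Icc 2 N, E i ≤ Emax) :
    ∃ p pH : ℕ → ℝ, Alloc N p pH ∧ Causality N Tf E pH ∧
      Capacity N Tf Emax E pH ∧ DataC N Tf γ B p := by
  have hspend (i : ℕ) : Tf * (E i / Tf) = E i := mul_div_cancel₀ (E i) hTf.ne'
  have hharvest (i : ℕ) (hi : i ∈ Finset.Icc 1 N) : 0 ≤ E i / Tf := div_nonneg (hE i hi) hTf.le
  refine ⟨fun i => max (E i / Tf) (requiredPower Tf (γ i) (B i)), fun i => E i / Tf,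
    fun i hi => ⟨hharvest i hi, le_max_left _ _⟩,
    Causality.of_forall_le fun i _ => (hspend i).le,
    Capacity.of_forall_le (fun i _ => (hspend i).ge) hEcap,
    DataC.of_forall_le_rate fun i hi => ?_⟩
  have hpower : 0 ≤ max (E i / Tf) (requiredPower Tf (γ i) (B i)) :=
    le_max_of_le_left (hharvest i hi)
  have hsnr : 0 < γ i := hγ i hi
  exact (le_rate_iff_requiredPower_le hTf hsnr (by positivity)).2 (le_max_right _ _)
end

section
/- Suppose the battery capacity is infinite, i.e. the Capacity constraints are omitted, so feasibility means 0 ≤ p_{H,i} ≤ p_i together with the Causality and Data constraints. Suppose (p*, p*_H) is the unique optimal solution of the grid power minimization problem and that p*_i = p*_{H,i} for all i (the grid energy used is zero). Then there exist water levels 0 ≤ ν_1 ≤ ν_2 ≤ … ≤ ν_N such that p*_i = max(ν_i − 1/γ_i, 0) for every i, and for every k ∈ {1,…,N−1}: if ν_k < ν_{k+1}, then either the energy causality constraint is tight at k, i.e. Σ_{i=1}^k T_f·p*_{H,i} = Σ_{i=1}^k E_i, or the cumulative data constraint is tight at k, i.e. Σ_{i=1}^k (T_f/2)·log₂(1 +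 γ_i p*_i) = Σ_{i=1}^k B_i. -/
/-- Feasibility with infinite battery capacity (no capacity constraint). -/
def FeasibleInf (N : ℕ) (Tf : ℝ) (γ E B p pH : ℕ → ℝ) : Prop :=
  Alloc N p pH ∧ Causality N Tf E pH ∧ DataC N Tf γ B p

/-- Grid energy `Σ_{i=1}^N T_f (p_i − p_{H,i})` of an allocation. -/
def gridEnergy (N : ℕ) (Tf : ℝ) (p pH : ℕ → ℝ) : ℝ :=
  ∑ i ∈ Finset.Icc 1 N, Tf * (p i - pH i)

/-- Optimality: a feasible allocation minimizing grid energy (infinite battery). -/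
def OptimalInf (N : ℕ) (Tf : ℝ) (γ E B p pH : ℕ → ℝ) : Prop :=
  FeasibleInf N Tf γ E B p pH ∧
  ∀ q qH : ℕ → ℝ, FeasibleInf N Tf γ E B q qH →
    gridEnergy N Tf p pH ≤ gridEnergy N Tf q qH

/-!
When no grid energy is used, every power profile that the harvested energy alone can carry is
optimal, so uniqueness of the optimum says that `p` admits no feasible perturbation at all. In
particular the total data constraint is tight, so a data constraint on the frames after `k` is tight
exactly if the cumulative one at `k` is. In terms of the water surface `hᵢ = pᵢ + 1 / γᵢ`, moving
power from frame `b` to a frame `a` with `hₐ < h_b` increases the total rate, and it violates a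
constraint only if `p_b = 0` or if the energy or the cumulative data constraint is tight at some
frame in `[a, b)`. Hence, if `p_b > 0`, then `b` has the lowest surface among the frames that no
tight constraint separates from it. The minimum of the surface over these frames is therefore a
water level for `p`; passing from `b` to `b + 1` only removes frames from this set, and it removes
some only if a constraint is tight at `b`.
-/

open Filter Topology

theorem sum_Icc_one_add_sum_Icc_succ {M : Type*} [AddCommMonoid M] (f : ℕ → M) {k N : ℕ}
    (hk : k ≤ N) :
    ∑ i ∈ Finset.Icc 1 k, f i + ∑ i ∈ Finset.Icc (k + 1) N, f i = ∑ i ∈ Finset.Icc 1 N, f i := by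
  simpa only [← Finset.Icc_add_one_left_eq_Ioc, zero_add] using
    Finset.sum_Ioc_consecutive f k.zero_le hk

theorem sum_Icc_one_eq_of_sum_Icc_succ_eq {M : Type*} [AddCancelCommMonoid M] {f g : ℕ → M}
    {k N : ℕ} (hk : k ≤ N) (htotal : ∑ i ∈ Finset.Icc 1 N, f i = ∑ i ∈ Finset.Icc 1 N, g i)
    (htail : ∑ i ∈ Finset.Icc (k + 1) N, f i = ∑ i ∈ Finset.Icc (k + 1) N, g i) :
    ∑ i ∈ Finset.Icc 1 k, f i = ∑ i ∈ Finset.Icc 1 k, g i := by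
  rw [← sum_Icc_one_add_sum_Icc_succ f hk, ← sum_Icc_one_add_sum_Icc_succ g hk, htail] at htotal
  exact add_right_cancel htotal

theorem sum_single_sub_single_div {ι K : Type*} [DecidableEq ι] [DivisionRing K] (s : Finset ι)
    (a b : ι) (w : ι → K) :
    ∑ i ∈ s, (Pi.single a 1 - Pi.single b 1 : ι → K) i / w i =
      (if a ∈ s then 1 / w a else 0) - if b ∈ s then 1 / w b else 0 := by
  simp only [Pi.sub_apply, Pi.single_apply, sub_div, ite_div, zero_div, Finset.sum_sub_distrib,
    Finset.sum_ite_eq']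

theorem eventually_le_nhdsGT_of_hasDerivAt {f : ℝ → ℝ} {f' c x : ℝ} (hf : HasDerivAt f f' x)
    (hc : c ≤ f x) (hf' : f x = c → 0 < f') : ∀ᶠ y in 𝓝[>] x, c ≤ f y := by
  rcases hc.eq_or_lt with heq | hlt
  · have hslope : ∀ᶠ y in 𝓝[>] x, 0 < slope f x y :=
      (hasDerivAt_iff_tendsto_slope.mp hf).mono_left (nhdsGT_le_nhdsNE x)
        |>.eventually_const_lt (hf' heq.symm)
    filter_upwards [hslope, self_mem_nhdsWithin] with y hy hxy
    exact hc.trans ((slope_pos_iff_of_le (le_of_lt hxy)).mp hy).le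
  · exact nhdsWithin_le_nhds <|
      (hf.continuousAt.eventually_const_lt hlt).mono fun _ => le_of_lt

theorem eventually_le_add_mul {c x d : ℝ} (hc : c ≤ x) (hd : x = c → 0 ≤ d) :
    ∀ᶠ ε in 𝓝[>] (0 : ℝ), c ≤ x + ε * d := by
  rcases hc.eq_or_lt with heq | hlt
  · filter_upwards [self_mem_nhdsWithin] with ε hε
    exact hc.trans (le_add_of_nonneg_right (mul_nonneg (le_of_lt hε) (hd heq.symm)))
  · have hcont : ContinuousAt (fun ε : ℝ => x + ε * d) 0 := by fun_prop
    exact nhdsWithin_le_nhds <|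
      (hcont.eventually_const_lt (by simpa using hlt)).mono fun _ => le_of_lt

section WaterLevel

variable {α : Type*} [ConditionallyCompleteLinearOrder α] {N : ℕ} {T : ℕ → Prop} {h : ℕ → α}
  {j k : ℕ}

/-- The frames `j ∈ [1, N]` that no frame of `T` in `[j, k)` separates from frame `k`. All frames
`j ∈ [k, N]` belong to this set. -/
def unblocked (N : ℕ) (T : ℕ → Prop) (k : ℕ) : Set ℕ :=
  {j | j ∈ Finset.Icc 1 N ∧ ∀ l ∈ Finset.Ico j k, ¬ T l}

/-- The least height `h j` over the frames `j` in `unblocked N T k`, used as water level of frame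
`k`. For `k ∉ [1, N]` it may be an infimum over the empty set. -/
noncomputable def waterLevel (N : ℕ) (T : ℕ → Prop) (h : ℕ → α) (k : ℕ) : α :=
  sInf (h '' unblocked N T k)

theorem self_mem_unblocked (hk : k ∈ Finset.Icc 1 N) : k ∈ unblocked N T k :=
  ⟨hk, by simp⟩

theorem unblocked_succ_subset : unblocked N T (k + 1) ⊆ unblocked N T k :=
  fun _ hj => ⟨hj.1, fun l hl => hj.2 l (Finset.Ico_subset_Ico_right k.le_succ hl)⟩

theorem unblocked_subset_succ (hk : ¬ T k) : unblocked N T k ⊆ unblocked N T (k + 1) := by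
  refine fun j hj => ⟨hj.1, fun l hl => ?_⟩
  obtain ⟨hjl, hlk⟩ := Finset.mem_Ico.mp hl
  rcases (Nat.lt_succ_iff.mp hlk).eq_or_lt with rfl | hlk
  · exact hk
  · exact hj.2 l (Finset.mem_Ico.mpr ⟨hjl, hlk⟩)

theorem finite_unblocked : (unblocked N T k).Finite :=
  (Finset.Icc 1 N).finite_toSet.subset fun _ hj => hj.1

theorem waterLevel_le (hj : j ∈ unblocked N T k) : waterLevel N T h k ≤ h j :=
  csInf_le (finite_unblocked.image h).bddBelow (Set.mem_image_of_mem h hj)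

theorem exists_eq_waterLevel (hk : k ∈ Finset.Icc 1 N) :
    ∃ j ∈ unblocked N T k, h j = waterLevel N T h k :=
  (Set.Nonempty.image h ⟨k, self_mem_unblocked hk⟩).csInf_mem (finite_unblocked.image h)

theorem waterLevel_le_succ (hk : k + 1 ∈ Finset.Icc 1 N) :
    waterLevel N T h k ≤ waterLevel N T h (k + 1) := by
  obtain ⟨j, hj, heq⟩ := exists_eq_waterLevel (T := T) (h := h) hk
  exact heq ▸ waterLevel_le (unblocked_succ_subset hj)

theorem of_waterLevel_lt_succ (hlt : waterLevel N T h k < waterLevel N T h (k + 1)) : T k := by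
  by_contra hk
  have heq : unblocked N T (k + 1) = unblocked N T k :=
    unblocked_succ_subset.antisymm (unblocked_subset_succ hk)
  exact hlt.ne (by rw [waterLevel, waterLevel, heq])

theorem waterLevel_eq_self (hk : k ∈ Finset.Icc 1 N) (hmin : ∀ j ∈ unblocked N T k, h k ≤ h j) :
    waterLevel N T h k = h k := by
  obtain ⟨j, hj, heq⟩ := exists_eq_waterLevel (T := T) (h := h) hk
  exact (waterLevel_le (self_mem_unblocked hk)).antisymm (heq ▸ hmin j hj)

end WaterLevel

section WaterFilling

variable {N : ℕ} {Tf : ℝ} {γ E B p pH d : ℕ → ℝ} {a b i k : ℕ}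

/-- The height of the water in frame `i` when power `p i` is poured over the ground level
`1 / γ i`; up to a constant factor, its inverse is the marginal rate of the frame. -/
noncomputable def waterSurface (γ p : ℕ → ℝ) (i : ℕ) : ℝ :=
  p i + 1 / γ i

/-- Equality at frame `k` in the energy causality constraint, with all power harvested, or in the
cumulative data constraint. -/
def IsTightAt (Tf : ℝ) (γ E B p : ℕ → ℝ) (k : ℕ) : Prop :=
  (∑ i ∈ Finset.Icc 1 k, Tf * p i = ∑ i ∈ Finset.Icc 1 k, E i) ∨
    (∑ i ∈ Finset.Icc 1 k, rate Tf γ p i = ∑ i ∈ Finset.Icc 1 k, B i)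

/-- First-order conditions under which `p + ε • d` remains feasible without grid energy for small
`ε > 0`. Constraints that are slack at `p` impose nothing; a tight data constraint has to improve
strictly unless `d` does not affect it, because the rates are not linear. -/
structure IsFeasibleDirection (N : ℕ) (Tf : ℝ) (γ E B p d : ℕ → ℝ) : Prop where
  power : ∀ i ∈ Finset.Icc 1 N, p i = 0 → 0 ≤ d i
  energy : ∀ k ∈ Finset.Icc 1 N,
    ∑ i ∈ Finset.Icc 1 k, Tf * p i = ∑ i ∈ Finset.Icc 1 k, E i → ∑ i ∈ Finset.Icc 1 k, d i ≤ 0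
  data : ∀ k ∈ Finset.Icc 1 N,
    ∑ i ∈ Finset.Icc k N, rate Tf γ p i = ∑ i ∈ Finset.Icc k N, B i →
      (∀ i ∈ Finset.Icc k N, d i = 0) ∨ 0 < ∑ i ∈ Finset.Icc k N, d i / waterSurface γ p i

/-- `p` is the only power profile that meets all constraints with harvested energy alone; profiles
are compared on the frames `1, …, N`. -/
structure IsUniqueGridFree (N : ℕ) (Tf : ℝ) (γ E B p : ℕ → ℝ) : Prop where
  feasible : FeasibleInf N Tf γ E B p p
  eq_of_feasible : ∀ q, FeasibleInf N Tf γ E B q q → ∀ i ∈ Finset.Icc 1 N, q i = p i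

theorem FeasibleInf.power_nonneg (hp : FeasibleInf N Tf γ E B p pH) (hi : i ∈ Finset.Icc 1 N) :
    0 ≤ p i :=
  (hp.1 i hi).1.trans (hp.1 i hi).2

theorem FeasibleInf.optimalInf (hp : FeasibleInf N Tf γ E B p p) (hTf : 0 ≤ Tf) :
    OptimalInf N Tf γ E B p p := by
  refine ⟨hp, fun q qH hq => ?_⟩
  calc gridEnergy N Tf p p = 0 := by simp [gridEnergy]
    _ ≤ gridEnergy N Tf q qH :=
      Finset.sum_nonneg fun i hi => mul_nonneg hTf (sub_nonneg.mpr (hq.1 i hi).2)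

theorem sum_energy_congr (hH : ∀ i ∈ Finset.Icc 1 N, p i = pH i) (hk : k ≤ N) :
    ∑ i ∈ Finset.Icc 1 k, Tf * p i = ∑ i ∈ Finset.Icc 1 k, Tf * pH i :=
  Finset.sum_congr rfl fun i hi => by rw [hH i (Finset.Icc_subset_Icc_right hk hi)]

theorem isUniqueGridFree_of_optimalInf (hTf : 0 ≤ Tf) (hopt : OptimalInf N Tf γ E B p pH)
    (huniq : ∀ q qH : ℕ → ℝ, OptimalInf N Tf γ E B q qH →
      ∀ i ∈ Finset.Icc 1 N, q i = p i ∧ qH i = pH i)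
    (hH : ∀ i ∈ Finset.Icc 1 N, p i = pH i) : IsUniqueGridFree N Tf γ E B p where
  feasible := by
    obtain ⟨hfeas, -⟩ := hopt
    refine ⟨fun i hi => ⟨hfeas.power_nonneg hi, le_rfl⟩, fun k hk => ?_, hfeas.2.2⟩
    exact (sum_energy_congr hH (Finset.mem_Icc.mp hk).2).trans_le (hfeas.2.1 k hk)
  eq_of_feasible q hq i hi := (huniq q q (hq.optimalInf hTf) i hi).1

theorem waterSurface_pos (hγ : 0 < γ i) (hp : 0 ≤ p i) : 0 < waterSurface γ p i :=
  add_pos_of_nonneg_of_pos hp (one_div_pos.mpr hγ)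

theorem hasDerivAt_rate_add_smul (hγ : 0 < γ i) (hp : 0 ≤ p i) :
    HasDerivAt (fun ε : ℝ => rate Tf γ (p + ε • d) i)
      (Tf / (2 * Real.log 2) * (d i / waterSurface γ p i)) 0 := by
  have hpos : 0 < 1 + γ i * p i := by positivity
  have hinner : HasDerivAt (fun ε : ℝ => 1 + γ i * (p i + ε * d i)) (γ i * d i) 0 := by
    simpa using ((((hasDerivAt_id (0 : ℝ)).mul_const (d i)).const_add (p i)).const_mul
      (γ i)).const_add 1
  have hrate := ((hinner.log (by simpa using hpos.ne')).div_const (Real.log 2)).const_mul (Tf / 2)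
  have hmarginal : γ i * d i / (1 + γ i * p i) = d i / waterSurface γ p i := by
    have hsurface : 1 + γ i * p i = γ i * waterSurface γ p i := by
      rw [waterSurface, mul_add, mul_one_div_cancel hγ.ne', add_comm]
    rw [hsurface, mul_div_mul_left _ _ hγ.ne']
  refine hrate.congr_deriv ?_
  rw [zero_mul, add_zero, hmarginal]
  ring

namespace IsFeasibleDirection

theorem eventually_alloc (hd : IsFeasibleDirection N Tf γ E B p d)
    (hp : ∀ i ∈ Finset.Icc 1 N, 0 ≤ p i) :
    ∀ᶠ ε in 𝓝[>] (0 : ℝ), Alloc N (p + ε • d) (p + ε • d) := by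
  refine (eventually_all_finset _).mpr fun i hi => ?_
  filter_upwards [eventually_le_add_mul (hp i hi) (hd.power i hi)] with ε hε
  exact ⟨hε, le_rfl⟩

theorem eventually_causality (hd : IsFeasibleDirection N Tf γ E B p d) (hTf : 0 ≤ Tf)
    (hC : Causality N Tf E p) : ∀ᶠ ε in 𝓝[>] (0 : ℝ), Causality N Tf E (p + ε • d) := by
  refine (eventually_all_finset _).mpr fun k hk => ?_
  have hslack := eventually_le_add_mul (d := -(Tf * ∑ i ∈ Finset.Icc 1 k, d i))
    (sub_nonneg.mpr (hC k hk)) fun htight => neg_nonneg.mpr <|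
      mul_nonpos_of_nonneg_of_nonpos hTf (hd.energy k hk (sub_eq_zero.mp htight).symm)
  filter_upwards [hslack] with ε hε
  have hsum : ∑ i ∈ Finset.Icc 1 k, Tf * (p + ε • d) i =
      ∑ i ∈ Finset.Icc 1 k, Tf * p i + ε * (Tf * ∑ i ∈ Finset.Icc 1 k, d i) := by
    simp only [Finset.mul_sum, ← Finset.sum_add_distrib, Pi.add_apply, Pi.smul_apply, smul_eq_mul]
    exact Finset.sum_congr rfl fun i _ => by ring
  linarith

theorem eventually_dataC (hd : IsFeasibleDirection N Tf γ E B p d) (hTf : 0 < Tf)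
    (hγ : ∀ i ∈ Finset.Icc 1 N, 0 < γ i) (hp : ∀ i ∈ Finset.Icc 1 N, 0 ≤ p i)
    (hD : DataC N Tf γ B p) : ∀ᶠ ε in 𝓝[>] (0 : ℝ), DataC N Tf γ B (p + ε • d) := by
  refine (eventually_all_finset _).mpr fun k hk => ?_
  by_cases hzero : ∀ i ∈ Finset.Icc k N, d i = 0
  · refine Eventually.of_forall fun ε => (hD k hk).trans_eq (Finset.sum_congr rfl fun i hi => ?_)
    simp [rate, hzero i hi]
  have hderiv : HasDerivAt (fun ε : ℝ => ∑ i ∈ Finset.Icc k N, rate Tf γ (p + ε • d) i)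
      (Tf / (2 * Real.log 2) * ∑ i ∈ Finset.Icc k N, d i / waterSurface γ p i) 0 := by
    rw [Finset.mul_sum]
    refine HasDerivAt.fun_sum fun i hi => ?_
    have hi' := Finset.Icc_subset_Icc_left (Finset.mem_Icc.mp hk).1 hi
    exact hasDerivAt_rate_add_smul (hγ i hi') (hp i hi')
  refine eventually_le_nhdsGT_of_hasDerivAt hderiv (by simpa using hD k hk) fun htight => ?_
  have hgain := (hd.data k hk (by simpa using htight)).resolve_left hzero
  positivity

end IsFeasibleDirection

theorem isFeasibleDirection_neg_single (hpa : 0 < p a)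
    (hslack : ∀ k ∈ Finset.Icc 1 a,
      ∑ i ∈ Finset.Icc k N, rate Tf γ p i ≠ ∑ i ∈ Finset.Icc k N, B i) :
    IsFeasibleDirection N Tf γ E B p (-Pi.single a 1) where
  power i _ hpi := by
    have hia : i ≠ a := by rintro rfl; exact hpa.ne' hpi
    simp [hia]
  energy k _ _ := by
    have hsingle : (0 : ℕ → ℝ) ≤ Pi.single a 1 := Pi.single_nonneg.mpr zero_le_one
    exact Finset.sum_nonpos fun i _ => neg_nonpos.mpr (hsingle i)
  data k hk htight := Or.inl fun i hi => by
    have hak : a < k := lt_of_not_ge fun hka =>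
      hslack k (Finset.mem_Icc.mpr ⟨(Finset.mem_Icc.mp hk).1, hka⟩) htight
    simp [(hak.trans_le (Finset.mem_Icc.mp hi).1).ne']

theorem isFeasibleDirection_single_sub_single (hγ : ∀ i ∈ Finset.Icc 1 N, 0 < γ i)
    (hp : ∀ i ∈ Finset.Icc 1 N, 0 ≤ p i)
    (htotal : ∑ i ∈ Finset.Icc 1 N, rate Tf γ p i = ∑ i ∈ Finset.Icc 1 N, B i)
    (ha : a ∈ Finset.Icc 1 N) (hb : b ∈ Finset.Icc 1 N) (hpb : 0 < p b)
    (hlt : waterSurface γ p a < waterSurface γ p b)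
    (hslack : ∀ l ∈ Finset.Ico a b, ¬ IsTightAt Tf γ E B p l) :
    IsFeasibleDirection N Tf γ E B p (Pi.single a 1 - Pi.single b 1) where
  power i _ hpi := by
    have hib : i ≠ b := by rintro rfl; exact hpb.ne' hpi
    have hsingle : (0 : ℕ → ℝ) ≤ Pi.single a 1 := Pi.single_nonneg.mpr zero_le_one
    simpa [hib] using hsingle i
  energy k _ htight := by
    have hk : a ≤ k → b ≤ k := fun hak => le_of_not_gt fun hkb =>
      hslack k (Finset.mem_Ico.mpr ⟨hak, hkb⟩) (Or.inl htight)
    have hsum := sum_single_sub_single_div (Finset.Icc 1 k) a b (1 : ℕ → ℝ)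
    simp only [Pi.one_apply, div_one, Finset.mem_Icc, (Finset.mem_Icc.mp ha).1,
      (Finset.mem_Icc.mp hb).1, true_and] at hsum
    rw [hsum]
    split_ifs with hak hbk <;> simp_all
  data k hk htight := by
    have hha := waterSurface_pos (hγ a ha) (hp a ha)
    have hhb := waterSurface_pos (hγ b hb) (hp b hb)
    rw [Finset.mem_Icc] at ha hb hk
    rcases le_or_gt k a with hka | hak
    · right
      have hgain := one_div_lt_one_div_of_lt hha hlt
      have hinv := one_div_pos.mpr hha
      rw [sum_single_sub_single_div, if_pos (Finset.mem_Icc.mpr ⟨hka, ha.2⟩)]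
      split_ifs <;> linarith
    · left
      have hbk : b < k := by
        obtain ⟨l, rfl⟩ : ∃ l, k = l + 1 := ⟨k - 1, by omega⟩
        exact lt_of_not_ge fun hkb => hslack l (Finset.mem_Ico.mpr ⟨by omega, hkb⟩) <|
          Or.inr (sum_Icc_one_eq_of_sum_Icc_succ_eq (by omega) htotal htight)
      intro i hi
      have hki := (Finset.mem_Icc.mp hi).1
      simp [(hak.trans_le hki).ne', (hbk.trans_le hki).ne']

namespace IsUniqueGridFree

theorem feasibleDirection_eq_zero (hp : IsUniqueGridFree N Tf γ E B p) (hTf : 0 < Tf)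
    (hγ : ∀ i ∈ Finset.Icc 1 N, 0 < γ i) (hd : IsFeasibleDirection N Tf γ E B p d)
    (hi : i ∈ Finset.Icc 1 N) : d i = 0 := by
  have hp0 : ∀ i ∈ Finset.Icc 1 N, 0 ≤ p i := fun i => hp.feasible.power_nonneg
  obtain ⟨ε, ⟨⟨hA, hC⟩, hD⟩, hε : 0 < ε⟩ :=
    (((hd.eventually_alloc hp0).and (hd.eventually_causality hTf.le hp.feasible.2.1)).and
      (hd.eventually_dataC hTf hγ hp0 hp.feasible.2.2)).and self_mem_nhdsWithin |>.exists
  have heq : ε * d i = 0 := by simpa using hp.eq_of_feasible _ ⟨hA, hC, hD⟩ i hi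
  exact (mul_eq_zero.mp heq).resolve_left hε.ne'

theorem exists_tight_data_of_power_pos (hp : IsUniqueGridFree N Tf γ E B p) (hTf : 0 < Tf)
    (hγ : ∀ i ∈ Finset.Icc 1 N, 0 < γ i) (ha : a ∈ Finset.Icc 1 N) (hpa : 0 < p a) :
    ∃ k ∈ Finset.Icc 1 a,
      ∑ i ∈ Finset.Icc k N, rate Tf γ p i = ∑ i ∈ Finset.Icc k N, B i := by
  by_contra! hslack
  simpa using hp.feasibleDirection_eq_zero hTf hγ (isFeasibleDirection_neg_single hpa hslack) ha

theorem exists_tight_data_after_zero_power (hp : IsUniqueGridFree N Tf γ E B p) (hTf : 0 < Tf)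
    (hγ : ∀ i ∈ Finset.Icc 1 N, 0 < γ i) :
    ∃ l ≤ N, (∀ i ∈ Finset.Icc 1 l, p i = 0) ∧
      ∑ i ∈ Finset.Icc (l + 1) N, rate Tf γ p i = ∑ i ∈ Finset.Icc (l + 1) N, B i := by
  by_cases hactive : ∃ a, a ∈ Finset.Icc 1 N ∧ 0 < p a
  · obtain ⟨ha, hpa⟩ := Nat.find_spec hactive
    obtain ⟨k, hk, htight⟩ := hp.exists_tight_data_of_power_pos hTf hγ ha hpa
    rw [Finset.mem_Icc] at ha hk
    obtain ⟨l, rfl⟩ : ∃ l, k = l + 1 := ⟨k - 1, by omega⟩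
    refine ⟨l, by omega, fun i hi => ?_, htight⟩
    rw [Finset.mem_Icc] at hi
    have hiN : i ∈ Finset.Icc 1 N := Finset.mem_Icc.mpr (by omega)
    have hmin := Nat.find_min hactive (m := i) (by omega)
    exact (hp.feasible.power_nonneg hiN).eq_of_not_lt' fun hpi => hmin ⟨hiN, hpi⟩
  · push Not at hactive
    exact ⟨N, le_rfl, fun i hi => (hactive i hi).antisymm (hp.feasible.power_nonneg hi), by simp⟩

theorem sum_rate_eq (hp : IsUniqueGridFree N Tf γ E B p) (hTf : 0 < Tf)
    (hγ : ∀ i ∈ Finset.Icc 1 N, 0 < γ i) (hB : ∀ k ≤ N, 0 ≤ ∑ i ∈ Finset.Icc 1 k, B i) :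
    ∑ i ∈ Finset.Icc 1 N, rate Tf γ p i = ∑ i ∈ Finset.Icc 1 N, B i := by
  rcases Nat.eq_zero_or_pos N with rfl | hN
  · simp
  refine le_antisymm ?_ (hp.feasible.2.2 1 (Finset.mem_Icc.mpr ⟨le_rfl, hN⟩))
  obtain ⟨l, hl, hzero, htight⟩ := hp.exists_tight_data_after_zero_power hTf hγ
  have hrate : ∑ i ∈ Finset.Icc 1 l, rate Tf γ p i = 0 :=
    Finset.sum_eq_zero fun i hi => by simp [rate, hzero i hi]
  rw [← sum_Icc_one_add_sum_Icc_succ _ hl, ← sum_Icc_one_add_sum_Icc_succ B hl, hrate, htight]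
  exact add_le_add_left (hB l hl) _

theorem waterSurface_le (hp : IsUniqueGridFree N Tf γ E B p) (hTf : 0 < Tf)
    (hγ : ∀ i ∈ Finset.Icc 1 N, 0 < γ i) (hB : ∀ k ≤ N, 0 ≤ ∑ i ∈ Finset.Icc 1 k, B i)
    (hb : b ∈ Finset.Icc 1 N) (hpb : 0 < p b)
    (ha : a ∈ unblocked N (IsTightAt Tf γ E B p) b) : waterSurface γ p b ≤ waterSurface γ p a := by
  obtain ⟨ha, hslack⟩ := ha
  by_contra! hlt
  have hab : a ≠ b := by rintro rfl; exact hlt.false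
  have hd := isFeasibleDirection_single_sub_single hγ (fun _ => hp.feasible.power_nonneg)
    (hp.sum_rate_eq hTf hγ hB) ha hb hpb hlt hslack
  simpa [hab] using hp.feasibleDirection_eq_zero hTf hγ hd ha

theorem power_eq_max (hp : IsUniqueGridFree N Tf γ E B p) (hTf : 0 < Tf)
    (hγ : ∀ i ∈ Finset.Icc 1 N, 0 < γ i) (hB : ∀ k ≤ N, 0 ≤ ∑ i ∈ Finset.Icc 1 k, B i)
    (hi : i ∈ Finset.Icc 1 N) :
    p i = max (waterLevel N (IsTightAt Tf γ E B p) (waterSurface γ p) i - 1 / γ i) 0 := by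
  rcases (hp.feasible.power_nonneg hi).eq_or_lt with hzero | hpos
  · have hle := waterLevel_le (h := waterSurface γ p)
      (self_mem_unblocked (T := IsTightAt Tf γ E B p) hi)
    rw [waterSurface, ← hzero, zero_add] at hle
    rw [← hzero, max_eq_right (sub_nonpos.mpr hle)]
  · rw [waterLevel_eq_self hi fun a ha => hp.waterSurface_le hTf hγ hB hi hpos ha, waterSurface,
      add_sub_cancel_right, max_eq_left hpos.le]

theorem waterLevel_nonneg (hp : IsUniqueGridFree N Tf γ E B p)
    (hγ : ∀ i ∈ Finset.Icc 1 N, 0 < γ i) (hk : k ∈ Finset.Icc 1 N) :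
    0 ≤ waterLevel N (IsTightAt Tf γ E B p) (waterSurface γ p) k := by
  obtain ⟨j, ⟨hj, -⟩, heq⟩ := exists_eq_waterLevel (T := IsTightAt Tf γ E B p)
    (h := waterSurface γ p) hk
  exact heq ▸ (waterSurface_pos (hγ j hj) (hp.feasible.power_nonneg hj)).le

end IsUniqueGridFree

end WaterFilling

theorem statement_8_general
    (N : ℕ) (Tf : ℝ) (hTf : 0 < Tf) (γ E B : ℕ → ℝ)
    (hγ : ∀ i ∈ Finset.Icc 1 N, 0 < γ i)
    (hB : ∀ k ≤ N, 0 ≤ ∑ i ∈ Finset.Icc 1 k, B i)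
    (pstar pHstar : ℕ → ℝ)
    (hopt : OptimalInf N Tf γ E B pstar pHstar)
    (huniq : ∀ q qH : ℕ → ℝ, OptimalInf N Tf γ E B q qH →
      ∀ i ∈ Finset.Icc 1 N, q i = pstar i ∧ qH i = pHstar i)
    (hH : ∀ i ∈ Finset.Icc 1 N, pstar i = pHstar i) :
    ∃ ν : ℕ → ℝ,
      (∀ k ∈ Finset.Icc 1 N, 0 ≤ ν k) ∧
      (∀ k ∈ Finset.Icc 1 (N - 1), ν k ≤ ν (k + 1)) ∧
      (∀ i ∈ Finset.Icc 1 N, pstar i = max (ν i - 1 / γ i) 0) ∧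
      (∀ k ∈ Finset.Icc 1 (N - 1), ν k < ν (k + 1) →
        (∑ i ∈ Finset.Icc 1 k, Tf * pHstar i = ∑ i ∈ Finset.Icc 1 k, E i) ∨
        (∑ i ∈ Finset.Icc 1 k, rate Tf γ pstar i = ∑ i ∈ Finset.Icc 1 k, B i)) := by
  have hp := isUniqueGridFree_of_optimalInf hTf.le hopt huniq hH
  refine ⟨waterLevel N (IsTightAt Tf γ E B pstar) (waterSurface γ pstar),
    fun k hk => hp.waterLevel_nonneg hγ hk, fun k hk => waterLevel_le_succ ?_,
    fun i hi => hp.power_eq_max hTf hγ hB hi, fun k hk hlt => ?_⟩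
  · rw [Finset.mem_Icc] at hk ⊢
    omega
  · have hkN : k ≤ N := (Finset.mem_Icc.mp hk).2.trans N.pred_le
    exact sum_energy_congr hH hkN ▸ of_waterLevel_lt_succ hlt

/-- Proposition 3: infinite battery, `(p*, p*_H)` the unique optimal
solution using no grid energy (`p*_i = p*_{H,i}` for all `i`).  Then the optimal
powers come from nonnegative non-decreasing water levels `ν_i` via
`p*_i = [ν_i − 1/γ_i]⁺`, and the water level may increase from `k` to `k+1` only if
the energy causality constraint or the cumulative data constraint is tight at `k`. -/
theorem statement_8
    (N : ℕ) (hN : 1 ≤ N) (Tf : ℝ) (hTf : 0 < Tf)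
    (γ E B : ℕ → ℝ)
    (hγ : ∀ i ∈ Finset.Icc 1 N, 0 < γ i)
    (hE : ∀ i ∈ Finset.Icc 1 N, 0 ≤ E i)
    (hB : ∀ i ∈ Finset.Icc 1 N, 0 ≤ B i)
    (pstar pHstar : ℕ → ℝ)
    (hopt : OptimalInf N Tf γ E B pstar pHstar)
    -- uniqueness of the optimal solution (on the relevant coordinates)
    (huniq : ∀ q qH : ℕ → ℝ, OptimalInf N Tf γ E B q qH →
      ∀ i ∈ Finset.Icc 1 N, q i = pstar i ∧ qH i = pHstar i)
    -- no grid energy is used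
    (hH : ∀ i ∈ Finset.Icc 1 N, pstar i = pHstar i) :
    ∃ ν : ℕ → ℝ,
      (∀ k ∈ Finset.Icc 1 N, 0 ≤ ν k) ∧
      (∀ k ∈ Finset.Icc 1 (N - 1), ν k ≤ ν (k + 1)) ∧
      (∀ i ∈ Finset.Icc 1 N, pstar i = max (ν i - 1 / γ i) 0) ∧
      (∀ k ∈ Finset.Icc 1 (N - 1), ν k < ν (k + 1) →
        (∑ i ∈ Finset.Icc 1 k, Tf * pHstar i = ∑ i ∈ Finset.Icc 1 k, E i) ∨
        (∑ i ∈ Finset.Icc 1 k, rate Tf γ pstar i = ∑ i ∈ Finset.Icc 1 k, B i)) := by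
  exact statement_8_general N Tf hTf γ E B hγ
    (fun _ hk => Finset.sum_nonneg fun i hi => hB i (Finset.Icc_subset_Icc_right hk hi))
    pstar pHstar hopt huniq hH
end

section
/- Suppose the battery capacity is infinite, i.e. the Capacity constraints are omitted, and the feasible set of the grid power minimization problem is nonempty with the minimum attained. Then there exists an optimal solution (p*, p*_H) and an index k̄ ∈ {0, 1, …, N} such that p*_k = p*_{H,k} for every k > k̄ (only harvested energy is used after frame k̄), and p*_k > p*_{H,k} for every k ≤ k̄ with p*_k > 0 (grid power is used in every positive-power frame up to frame k̄). -/
/-!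
Delaying the use of harvested energy preserves causality, and it leaves the grid energy unchanged
because that depends only on the totals. Let `m` be the last frame with `p_{H,m} < p_m`. Delaying to
frame `m` a small fraction of the harvested energy used in each earlier frame opens a gap in every
earlier frame that uses harvested energy, while the slack at `m` absorbs what is delayed. The powers
`p`, hence the data constraints, never change.
-/

/-- The sequence obtained from `x 1, x 2, …` by moving the fraction `c` of each term before index
`m` to index `m`. It models postponing the use of harvested energy; the value at `0` is irrelevant
because frames are numbered from `1`. -/
noncomputable def defer (c : ℝ) (m : ℕ) (x : ℕ → ℝ) (i : ℕ) : ℝ :=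
  if i < m then (1 - c) * x i else if i = m then x m + c * ∑ j ∈ Finset.Ico 1 m, x j else x i

section Defer

variable {c : ℝ} {m i k : ℕ} {x : ℕ → ℝ}

theorem defer_of_lt (hi : i < m) : defer c m x i = (1 - c) * x i :=
  if_pos hi

theorem defer_self : defer c m x m = x m + c * ∑ j ∈ Finset.Ico 1 m, x j := by
  simp [defer]

theorem defer_of_gt (hi : m < i) : defer c m x i = x i := by
  simp [defer, hi.not_gt, hi.ne']

theorem defer_le_of_lt (hc : 0 ≤ c) (hx : 0 ≤ x i) (hi : i < m) : defer c m x i ≤ x i := by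
  rw [defer_of_lt hi]
  exact mul_le_of_le_one_left hx (sub_le_self 1 hc)

theorem defer_lt_of_lt {y : ℝ} (hc : 0 < c) (hx : 0 ≤ x i) (hxy : x i ≤ y) (hy : 0 < y)
    (hi : i < m) : defer c m x i < y := by
  rw [defer_of_lt hi]
  rcases hx.eq_or_lt with hx_zero | hx_pos
  · simpa [← hx_zero] using hy
  · exact (mul_lt_of_lt_one_left hx_pos (sub_lt_self 1 hc)).trans_le hxy

theorem sum_Icc_defer (hm : 1 ≤ m) (hmk : m ≤ k) :
    ∑ i ∈ Finset.Icc 1 k, defer c m x i = ∑ i ∈ Finset.Icc 1 k, x i := by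
  induction k, hmk using Nat.le_induction with
  | base =>
    have sum_before :
        ∑ i ∈ Finset.Ico 1 m, defer c m x i = (1 - c) * ∑ i ∈ Finset.Ico 1 m, x i := by
      rw [Finset.mul_sum]
      exact Finset.sum_congr rfl fun i hi => defer_of_lt (Finset.mem_Ico.1 hi).2
    rw [← Finset.Ico_insert_right hm, Finset.sum_insert Finset.right_notMem_Ico,
      Finset.sum_insert Finset.right_notMem_Ico, defer_self, sum_before]
    ring
  | succ k hmk ih =>
    rw [Finset.sum_Icc_succ_top (by lia), Finset.sum_Icc_succ_top (by lia), ih,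
      defer_of_gt (Nat.lt_succ_of_le hmk)]

theorem sum_Icc_defer_le (hm : 1 ≤ m) (hc : 0 ≤ c) (hx : ∀ i ∈ Finset.Icc 1 k, 0 ≤ x i) :
    ∑ i ∈ Finset.Icc 1 k, defer c m x i ≤ ∑ i ∈ Finset.Icc 1 k, x i := by
  rcases le_or_gt m k with hmk | hkm
  · exact (sum_Icc_defer hm hmk).le
  · exact Finset.sum_le_sum fun i hi =>
      defer_le_of_lt hc (hx i hi) ((Finset.mem_Icc.1 hi).2.trans_lt hkm)

theorem exists_defer_self_lt {y : ℝ} (hy : x m < y) :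
    ∃ c : ℝ, 0 < c ∧ c < 1 ∧ defer c m x m < y := by
  have slack_pos : 0 < y - x m := sub_pos.2 hy
  obtain ⟨c, hc, hc_lt⟩ :=
    exists_pos_mul_lt slack_pos (max (y - x m) (∑ j ∈ Finset.Ico 1 m, x j))
  rw [max_mul_of_nonneg _ _ hc.le, max_lt_iff] at hc_lt
  refine ⟨c, hc, (mul_lt_iff_lt_one_right slack_pos).1 hc_lt.1, ?_⟩
  rw [defer_self]
  linarith

end Defer

section Allocation

variable {N m : ℕ} {Tf c : ℝ} {γ E B p pH : ℕ → ℝ}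

theorem Alloc.sum_Ico_nonneg (hA : Alloc N p pH) (hm : m ≤ N) :
    0 ≤ ∑ j ∈ Finset.Ico 1 m, pH j :=
  Finset.sum_nonneg fun j hj =>
    (hA j (Finset.Icc_subset_Icc_right hm (Finset.Ico_subset_Icc_self hj))).1

protected theorem Alloc.defer (hA : Alloc N p pH) (hc₀ : 0 ≤ c) (hc₁ : c ≤ 1)
    (hm : defer c m pH m ≤ p m) : Alloc N p (defer c m pH) := by
  intro i hi
  obtain ⟨h_nonneg, h_le⟩ := hA i hi
  rcases lt_trichotomy i m with him | rfl | hmi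
  · refine ⟨?_, (defer_le_of_lt hc₀ h_nonneg him).trans h_le⟩
    rw [defer_of_lt him]
    exact mul_nonneg (sub_nonneg.2 hc₁) h_nonneg
  · refine ⟨?_, hm⟩
    rw [defer_self]
    exact add_nonneg h_nonneg (mul_nonneg hc₀ (hA.sum_Ico_nonneg (Finset.mem_Icc.1 hi).2))
  · rw [defer_of_gt hmi]
    exact ⟨h_nonneg, h_le⟩

protected theorem Causality.defer (hC : Causality N Tf E pH) (hTf : 0 ≤ Tf)
    (hpH : ∀ i ∈ Finset.Icc 1 N, 0 ≤ pH i) (hm : 1 ≤ m) (hc : 0 ≤ c) :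
    Causality N Tf E (defer c m pH) := by
  intro k hk
  have hpH_k : ∀ i ∈ Finset.Icc 1 k, 0 ≤ pH i := fun i hi =>
    hpH i (Finset.Icc_subset_Icc_right (Finset.mem_Icc.1 hk).2 hi)
  calc ∑ i ∈ Finset.Icc 1 k, Tf * defer c m pH i
      = Tf * ∑ i ∈ Finset.Icc 1 k, defer c m pH i := (Finset.mul_sum ..).symm
    _ ≤ Tf * ∑ i ∈ Finset.Icc 1 k, pH i :=
        mul_le_mul_of_nonneg_left (sum_Icc_defer_le hm hc hpH_k) hTf
    _ = ∑ i ∈ Finset.Icc 1 k, Tf * pH i := Finset.mul_sum ..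
    _ ≤ ∑ i ∈ Finset.Icc 1 k, E i := hC k hk

theorem gridEnergy_defer (hm : m ∈ Finset.Icc 1 N) :
    gridEnergy N Tf p (defer c m pH) = gridEnergy N Tf p pH := by
  obtain ⟨hm_pos, hm_le⟩ := Finset.mem_Icc.1 hm
  simp only [gridEnergy, ← Finset.mul_sum, Finset.sum_sub_distrib, sum_Icc_defer hm_pos hm_le]

protected theorem OptimalInf.defer (h : OptimalInf N Tf γ E B p pH) (hTf : 0 ≤ Tf)
    (hm : m ∈ Finset.Icc 1 N) (hc₀ : 0 ≤ c) (hc₁ : c ≤ 1) (hcm : defer c m pH m ≤ p m) :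
    OptimalInf N Tf γ E B p (defer c m pH) := by
  obtain ⟨⟨hA, hC, hD⟩, h_min⟩ := h
  have hC' := hC.defer hTf (fun i hi => (hA i hi).1) (Finset.mem_Icc.1 hm).1 hc₀
  refine ⟨⟨hA.defer hc₀ hc₁ hcm, hC', hD⟩, fun q qH hq => ?_⟩
  rw [gridEnergy_defer hm]
  exact h_min q qH hq

theorem Alloc.exists_last_grid_frame (hA : Alloc N p pH) :
    ∃ m ≤ N, (∀ k ∈ Finset.Icc 1 N, m < k → p k = pH k) ∧ (m ≠ 0 → pH m < p m) := by
  classical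
  refine ⟨Nat.findGreatest (fun k => pH k < p k) N, Nat.findGreatest_le N, fun k hk hmk => ?_,
    Nat.findGreatest_of_ne_zero rfl⟩
  have no_gap : ¬ pH k < p k := Nat.findGreatest_is_greatest hmk (Finset.mem_Icc.1 hk).2
  exact (not_lt.1 no_gap).antisymm (hA k hk).2

theorem statement_10_general (hTf : 0 ≤ Tf) (h : OptimalInf N Tf γ E B p pH) :
    ∃ (pHstar : ℕ → ℝ) (kbar : ℕ),
      OptimalInf N Tf γ E B p pHstar ∧ kbar ≤ N ∧
      (∀ k ∈ Finset.Icc 1 N, kbar < k → p k = pHstar k) ∧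
      (∀ k ∈ Finset.Icc 1 N, k ≤ kbar → 0 < p k → pHstar k < p k) := by
  have hA : Alloc N p pH := h.1.1
  obtain ⟨m, hmN, h_after, h_gap⟩ := hA.exists_last_grid_frame
  rcases Nat.eq_zero_or_pos m with rfl | hm_pos
  · refine ⟨pH, 0, h, hmN, h_after, fun k hk hk_zero => ?_⟩
    exact absurd (Finset.mem_Icc.1 hk).1 hk_zero.not_gt
  obtain ⟨c, hc₀, hc₁, hcm⟩ := exists_defer_self_lt (h_gap hm_pos.ne')
  refine ⟨defer c m pH, m, h.defer hTf (Finset.mem_Icc.2 ⟨hm_pos, hmN⟩) hc₀.le hc₁.le hcm.le,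
    hmN, fun k hk hmk => ?_, fun k hk hkm hpk => ?_⟩
  · rw [defer_of_gt hmk]
    exact h_after k hk hmk
  · rcases hkm.lt_or_eq with hkm | rfl
    · exact defer_lt_of_lt hc₀ (hA k hk).1 (hA k hk).2 hpk hkm
    · exact hcm

end Allocation

/-- Proposition 4, threshold part: with infinite battery capacity, if
the feasible set is nonempty and the minimum of the grid energy is attained, there is
an optimal solution `(p*, p*_H)` and a threshold `k̄ ∈ {0, 1, …, N}` such that after
frame `k̄` only harvested energy is used, while in every positive-power frame up to
`k̄` some grid power is used. -/
theorem statement_10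
    (N : ℕ) (hN : 1 ≤ N) (Tf : ℝ) (hTf : 0 < Tf)
    (γ E B : ℕ → ℝ)
    (hγ : ∀ i ∈ Finset.Icc 1 N, 0 < γ i)
    (hE : ∀ i ∈ Finset.Icc 1 N, 0 ≤ E i)
    (hB : ∀ i ∈ Finset.Icc 1 N, 0 ≤ B i)
    (hfeas : ∃ p pH : ℕ → ℝ, FeasibleInf N Tf γ E B p pH)
    (hatt : ∃ p pH : ℕ → ℝ, OptimalInf N Tf γ E B p pH) :
    ∃ (pstar pHstar : ℕ → ℝ) (kbar : ℕ),
      OptimalInf N Tf γ E B pstar pHstar ∧ kbar ≤ N ∧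
      (∀ k ∈ Finset.Icc 1 N, kbar < k → pstar k = pHstar k) ∧
      (∀ k ∈ Finset.Icc 1 N, k ≤ kbar → 0 < pstar k → pHstar k < pstar k) := by
  obtain ⟨p, _, h⟩ := hatt
  exact ⟨p, statement_10_general hTf.le h⟩
end

section
/- (Exchange lemma, infinite battery.) Suppose the Capacity constraints are omitted, and let (p, p_H) satisfy 0 ≤ p_{H,i} ≤ p_i for all i together with the Causality and Data constraints. Fix k ∈ {1,…,N−1} and set δ = min{ p_{H,k}, p_{k+1} − p_{H,k+1} } ≥ 0. Define p'_H by p'_{H,k} = p_{H,k} − δ, p'_{H,k+1} = p_{H,k+1} + δ, and p'_{H,i} = p_{H,i} for all other i. Then (p, p'_H) also satisfies 0 ≤ p'_{H,i} ≤ p_i for all i together with the Causality and Data constraints, and it has the same grid energy: Σ_{i=1}^N T_f·(p_i − p'_{H,i}) = Σ_{i=1}^N T_f·(p_i − p_{H,i}). -/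
/-!
Moving harvested power to a later frame can only lower the prefix sums `∑ i ≤ m, pH i`, so energy
causality survives; the total over all frames is unchanged, and with it the grid energy. The data
constraints involve only `p`.
-/

/-- The vector obtained from `x` by moving the amount `δ` from coordinate `a` to coordinate `b`.
For `a = b` it is `x` itself. -/
def transfer {ι M : Type*} [DecidableEq ι] [AddCommGroup M] (x : ι → M) (a b : ι) (δ : M) :
    ι → M :=
  x + Pi.single b δ - Pi.single a δ

section Transfer

variable {ι M : Type*} [DecidableEq ι] [AddCommGroup M] {x y : ι → M} {a b : ι} {δ : M}

theorem transfer_apply (x : ι → M) (a b : ι) (δ : M) (i : ι) :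
    transfer x a b δ i = x i + (if i = b then δ else 0) - (if i = a then δ else 0) := by
  simp only [transfer, Pi.sub_apply, Pi.add_apply, Pi.single_apply]

theorem eq_transfer (hab : a ≠ b) (ha : y a = x a - δ) (hb : y b = x b + δ)
    (hrest : ∀ i, i ≠ a → i ≠ b → y i = x i) : y = transfer x a b δ := by
  funext i
  rw [transfer_apply]
  rcases eq_or_ne i a with rfl | hia
  · simp [hab, ha]
  · rcases eq_or_ne i b with rfl | hib
    · simp [hia, hb]
    · simp [hia, hib, hrest i hia hib]

theorem sum_transfer (s : Finset ι) (x : ι → M) (a b : ι) (δ : M) :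
    ∑ i ∈ s, transfer x a b δ i =
      ∑ i ∈ s, x i + (if b ∈ s then δ else 0) - (if a ∈ s then δ else 0) := by
  simp only [transfer_apply, Finset.sum_sub_distrib, Finset.sum_add_distrib, Finset.sum_ite_eq']

theorem sum_transfer_eq_sum {s : Finset ι} (x : ι → M) (δ : M) (h : a ∈ s ↔ b ∈ s) :
    ∑ i ∈ s, transfer x a b δ i = ∑ i ∈ s, x i := by
  simp only [sum_transfer, h, add_sub_cancel_right]

theorem sum_transfer_le_sum [PartialOrder M] [IsOrderedAddMonoid M] {s : Finset ι} (x : ι → M)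
    (hδ : 0 ≤ δ) (h : b ∈ s → a ∈ s) :
    ∑ i ∈ s, transfer x a b δ i ≤ ∑ i ∈ s, x i := by
  have gain_le_loss : (if b ∈ s then δ else 0) ≤ if a ∈ s then δ else 0 := by
    split_ifs with hb ha ha
    exacts [le_rfl, absurd (h hb) ha, hδ, le_rfl]
  rw [sum_transfer, sub_le_iff_le_add]
  gcongr

end Transfer

section Allocation

variable {N : ℕ} {Tf : ℝ} {γ E B p pH : ℕ → ℝ} {j l : ℕ} {δ : ℝ}

protected theorem Alloc.transfer (h : Alloc N p pH) (hδ : 0 ≤ δ) (hj : δ ≤ pH j)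
    (hl : δ ≤ p l - pH l) : Alloc N p (transfer pH j l δ) := by
  intro i hi
  obtain ⟨h_nonneg, h_le⟩ := h i hi
  rw [transfer_apply]
  split_ifs <;> subst_vars <;> constructor <;> linarith

protected theorem Causality.transfer (h : Causality N Tf E pH) (hTf : 0 ≤ Tf) (hj : 1 ≤ j)
    (hjl : j ≤ l) (hδ : 0 ≤ δ) : Causality N Tf E (transfer pH j l δ) := by
  intro m hm
  have mem_of_mem : l ∈ Finset.Icc 1 m → j ∈ Finset.Icc 1 m := fun hl =>
    Finset.mem_Icc.2 ⟨hj, hjl.trans (Finset.mem_Icc.1 hl).2⟩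
  calc ∑ i ∈ Finset.Icc 1 m, Tf * transfer pH j l δ i
      = Tf * ∑ i ∈ Finset.Icc 1 m, transfer pH j l δ i := (Finset.mul_sum ..).symm
    _ ≤ Tf * ∑ i ∈ Finset.Icc 1 m, pH i :=
        mul_le_mul_of_nonneg_left (sum_transfer_le_sum pH hδ mem_of_mem) hTf
    _ = ∑ i ∈ Finset.Icc 1 m, Tf * pH i := Finset.mul_sum ..
    _ ≤ ∑ i ∈ Finset.Icc 1 m, E i := h m hm

theorem gridEnergy_transfer (Tf : ℝ) (p pH : ℕ → ℝ) (δ : ℝ)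
    (h : j ∈ Finset.Icc 1 N ↔ l ∈ Finset.Icc 1 N) :
    gridEnergy N Tf p (transfer pH j l δ) = gridEnergy N Tf p pH := by
  simp only [gridEnergy, ← Finset.mul_sum, Finset.sum_sub_distrib, sum_transfer_eq_sum pH δ h]

theorem Alloc.min_nonneg (h : Alloc N p pH) (hj : j ∈ Finset.Icc 1 N)
    (hl : l ∈ Finset.Icc 1 N) : 0 ≤ min (pH j) (p l - pH l) :=
  le_min (h j hj).1 (sub_nonneg.2 (h l hl).2)

theorem statement_11_general (hTf : 0 ≤ Tf) (hfeas : FeasibleInf N Tf γ E B p pH)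
    (hj : j ∈ Finset.Icc 1 N) (hl : l ∈ Finset.Icc 1 N) (hjl : j ≤ l) (hδ : 0 ≤ δ)
    (hδ_le : δ ≤ min (pH j) (p l - pH l)) :
    FeasibleInf N Tf γ E B p (transfer pH j l δ) ∧
      gridEnergy N Tf p (transfer pH j l δ) = gridEnergy N Tf p pH := by
  obtain ⟨h_alloc, h_causal, h_data⟩ := hfeas
  obtain ⟨hδj, hδl⟩ := le_min_iff.1 hδ_le
  exact ⟨⟨h_alloc.transfer hδ hδj hδl,
    h_causal.transfer hTf (Finset.mem_Icc.1 hj).1 hjl hδ, h_data⟩,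
    gridEnergy_transfer Tf p pH δ (iff_of_true hj hl)⟩

end Allocation

/-- exchange lemma, infinite battery: moving the amount
`δ = min{p_{H,k}, p_{k+1} − p_{H,k+1}}` of harvested power from frame `k` to frame
`k+1` preserves feasibility and the grid energy. -/
theorem statement_11
    (N : ℕ) (hN : 1 ≤ N) (Tf : ℝ) (hTf : 0 < Tf)
    (γ E B : ℕ → ℝ)
    (hγ : ∀ i ∈ Finset.Icc 1 N, 0 < γ i)
    (hE : ∀ i ∈ Finset.Icc 1 N, 0 ≤ E i)
    (hB : ∀ i ∈ Finset.Icc 1 N, 0 ≤ B i)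
    (p pH : ℕ → ℝ)
    (hfeas : FeasibleInf N Tf γ E B p pH)
    (k : ℕ) (hk : k ∈ Finset.Icc 1 (N - 1))
    (δ : ℝ) (hδ : δ = min (pH k) (p (k + 1) - pH (k + 1)))
    (pH' : ℕ → ℝ)
    (hk' : pH' k = pH k - δ)
    (hk1' : pH' (k + 1) = pH (k + 1) + δ)
    (hrest : ∀ i : ℕ, i ≠ k → i ≠ k + 1 → pH' i = pH i) :
    0 ≤ δ ∧ FeasibleInf N Tf γ E B p pH' ∧
      gridEnergy N Tf p pH' = gridEnergy N Tf p pH := by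
  obtain ⟨hk_mem, hk_succ_mem⟩ : k ∈ Finset.Icc 1 N ∧ k + 1 ∈ Finset.Icc 1 N := by
    simp only [Finset.mem_Icc] at hk ⊢
    lia
  have hδ_nonneg : 0 ≤ δ := hδ ▸ hfeas.1.min_nonneg hk_mem hk_succ_mem
  rw [eq_transfer k.lt_succ_self.ne hk' hk1' hrest]
  exact ⟨hδ_nonneg,
    statement_11_general hTf.le hfeas hk_mem hk_succ_mem k.le_succ hδ_nonneg hδ.le⟩
end
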